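/- arXiv:2204.09512 — 2 statements merged into one kernel-verified Lean document; each statement's English description precedes it below -/
import Mathlib

section
/- Let X be a T0 space and let 𝐝(X) be the set of closed d-sets of X, ordered by inclusion. If the map η : X → Σ 𝐝(X), η(x) = closure({x}), is continuous, then ⟨Σ 𝐝(X), η⟩ is a d-reflection of X: Σ 𝐝(X) is a d-space, and for every continuous map f : X → Y to a d-space Y there is a unique continuous map f* : Σ 𝐝(X) → Y with f* ∘ η = f. -/
/-!
A `𝐊`-set `A` sends every continuous `f : X → Y` to the generic point of `closure (f '' A)`. When
all `𝐊`-spaces are d-spaces, these generic points are directed along a directed family of `𝐊`-sets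
and have a supremum, so the closure of the union is again a `𝐊`-set. Hence `𝐊(X)` is a dcpo with
directed suprema given by closed unions, and `A ↦` (generic point of `closure (f '' A)`) is Scott
continuous. Conversely, if `Σ 𝐊(X)` is a `𝐊`-space and `η` is continuous, then `A` is the generic
point of `closure (η '' A)`; since continuous maps preserve generic points, `f` has no other
extension along `η`.
-/

universe u v

open Set

/-- The specialization order on a topological space: `specLE x y` iff `x ∈ closure {y}`. -/
def specLE {X : Type*} [TopologicalSpace X] (x y : X) : Prop :=
  x ∈ closure ({y} : Set X)

/-- `a` is an upper bound of `D` with respect to the specialization order. -/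
def specUB {X : Type*} [TopologicalSpace X] (D : Set X) (a : X) : Prop :=
  ∀ d ∈ D, specLE d a

/-- `a` is a least upper bound of `D` with respect to the specialization order. -/
def specLUB {X : Type*} [TopologicalSpace X] (D : Set X) (a : X) : Prop :=
  specUB D a ∧ ∀ b, specUB D b → specLE a b

/-- `U` is Scott open with respect to the specialization order. -/
def ScottOpenSpec {X : Type*} [TopologicalSpace X] (U : Set X) : Prop :=
  (∀ x y, specLE x y → x ∈ U → y ∈ U) ∧
  ∀ D : Set X, D.Nonempty → DirectedOn specLE D → ∀ a, specLUB D a → a ∈ U →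
    (D ∩ U).Nonempty

/-- A d-space (monotone convergence space): a T0 space which is a dcpo in its
specialization order and in which every open set is Scott open with respect to
the specialization order. -/
def DSpace (X : Type*) [TopologicalSpace X] : Prop :=
  T0Space X ∧
  (∀ D : Set X, D.Nonempty → DirectedOn specLE D → ∃ a, specLUB D a) ∧
  (∀ U : Set X, IsOpen U → ScottOpenSpec U)

/-- A set is saturated if it is an intersection of open sets. -/
def Saturated {X : Type*} [TopologicalSpace X] (A : Set X) : Prop :=
  ∃ 𝒰 : Set (Set X), (∀ U ∈ 𝒰, IsOpen U) ∧ A = ⋂₀ 𝒰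

/-- A T0 space is well-filtered if every filtered (under reverse inclusion) family of
nonempty compact saturated sets whose intersection is contained in an open set `U`
has a member contained in `U`. -/
def WellFiltered (X : Type*) [TopologicalSpace X] : Prop :=
  T0Space X ∧
  ∀ 𝒦 : Set (Set X), 𝒦.Nonempty →
    (∀ K ∈ 𝒦, K.Nonempty ∧ IsCompact K ∧ Saturated K) →
    DirectedOn (fun A B => B ⊆ A) 𝒦 →
    ∀ U : Set X, IsOpen U → ⋂₀ 𝒦 ⊆ U → ∃ K ∈ 𝒦, K ⊆ U

/-- A nonempty closed set which is irreducible. -/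
def IrredClosed {X : Type*} [TopologicalSpace X] (A : Set X) : Prop :=
  A.Nonempty ∧ IsClosed A ∧
  ∀ F₁ F₂ : Set X, IsClosed F₁ → IsClosed F₂ → A ⊆ F₁ ∪ F₂ → (A ⊆ F₁ ∨ A ⊆ F₂)

/-- A space is sober if every irreducible closed set is the closure of a unique point. -/
def Sober (X : Type*) [TopologicalSpace X] : Prop :=
  ∀ A : Set X, IrredClosed A → ∃! x : X, A = closure ({x} : Set X)

/-- The specialization preorder on a topological space. -/
def specPreorder (Y : Type*) [TopologicalSpace Y] : Preorder Y where
  le := specLE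
  le_refl x := subset_closure rfl
  le_trans x y z hxy hyz :=
    closure_minimal (Set.singleton_subset_iff.mpr hyz) isClosed_closure hxy

/-- A Scott open subset of a poset: an upper set inaccessible by suprema of directed sets. -/
def IsScottOpen {P : Type*} [Preorder P] (U : Set P) : Prop :=
  IsUpperSet U ∧
  ∀ D : Set P, D.Nonempty → DirectedOn (· ≤ ·) D → ∀ a, IsLUB D a → a ∈ U →
    (D ∩ U).Nonempty

/-- The Scott topology on a poset. `Σ P` is `P` equipped with `scottTop P`. -/
def scottTop (P : Type*) [Preorder P] : TopologicalSpace P where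
  IsOpen := IsScottOpen
  isOpen_univ := by
    refine ⟨isUpperSet_univ, fun D hD _ _ _ _ => ?_⟩
    obtain ⟨d, hd⟩ := hD
    exact ⟨d, hd, trivial⟩
  isOpen_inter := by
    rintro U V ⟨hU1, hU2⟩ ⟨hV1, hV2⟩
    refine ⟨hU1.inter hV1, ?_⟩
    rintro D hne hdir a ha ⟨haU, haV⟩
    obtain ⟨d1, hd1D, hd1U⟩ := hU2 D hne hdir a ha haU
    obtain ⟨d2, hd2D, hd2V⟩ := hV2 D hne hdir a ha haV
    obtain ⟨d3, hd3D, h13, h23⟩ := hdir d1 hd1D d2 hd2D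
    exact ⟨d3, hd3D, hU1 h13 hd1U, hV1 h23 hd2V⟩
  isOpen_sUnion := by
    intro S hS
    refine ⟨isUpperSet_sUnion fun s hs => (hS s hs).1, ?_⟩
    rintro D hne hdir a ha ⟨U, hUS, haU⟩
    obtain ⟨d, hdD, hdU⟩ := (hS U hUS).2 D hne hdir a ha haU
    exact ⟨d, hdD, U, hUS, hdU⟩

/-- A dcpo: every nonempty directed subset has a least upper bound. -/
def IsDcpo (P : Type*) [Preorder P] : Prop :=
  ∀ D : Set P, D.Nonempty → DirectedOn (· ≤ ·) D → ∃ a, IsLUB D a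

/-- The way-below relation. -/
def wayBelow {P : Type*} [Preorder P] (x y : P) : Prop :=
  ∀ D : Set P, D.Nonempty → DirectedOn (· ≤ ·) D → ∀ a, IsLUB D a → y ≤ a →
    ∃ d ∈ D, x ≤ d

/-- A poset is Noetherian if every (nonempty) directed subset has a greatest member. -/
def Noetherian (P : Type*) [Preorder P] : Prop :=
  ∀ D : Set P, D.Nonempty → DirectedOn (· ≤ ·) D → ∃ m ∈ D, ∀ d ∈ D, d ≤ m

/-- An ideal: a (nonempty) directed lower set. -/
def IsIdealSet {P : Type*} [Preorder P] (I : Set P) : Prop :=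
  I.Nonempty ∧ DirectedOn (· ≤ ·) I ∧ IsLowerSet I

/-- The Alexandroff topology on a poset: the open sets are the upper sets. -/
def alexTop (P : Type*) [Preorder P] : TopologicalSpace P where
  IsOpen := IsUpperSet
  isOpen_univ := isUpperSet_univ
  isOpen_inter _ _ := IsUpperSet.inter
  isOpen_sUnion _ h := isUpperSet_sUnion h

/-- The space `X_⊤` obtained from `X` by adjoining a new top point `⊤` (here `none`):
the closed sets are the closed sets of `X` together with the whole space. -/
def topTop (X : Type*) [TopologicalSpace X] : TopologicalSpace (Option X) where
  IsOpen V := V = ∅ ∨ ∃ U : Set X, IsOpen U ∧ V = insert none (some '' U)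
  isOpen_univ := by
    refine Or.inr ⟨Set.univ, isOpen_univ, ?_⟩
    ext (_ | a) <;> simp
  isOpen_inter := by
    rintro V W (rfl | ⟨U₁, hU₁, rfl⟩) hW
    · exact Or.inl (by simp)
    rcases hW with rfl | ⟨U₂, hU₂, rfl⟩
    · exact Or.inl (by simp)
    · refine Or.inr ⟨U₁ ∩ U₂, hU₁.inter hU₂, ?_⟩
      ext (_ | a) <;> simp
  isOpen_sUnion := by
    classical
    intro S hS
    by_cases h0 : ⋃₀ S = ∅
    · exact Or.inl h0
    · refine Or.inr ⟨{x : X | some x ∈ ⋃₀ S}, ?_, ?_⟩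
      · have h1 : {x : X | some x ∈ ⋃₀ S} = ⋃ V ∈ S, some ⁻¹' V := by
          ext x; simp [Set.mem_sUnion]
        rw [h1]
        refine isOpen_biUnion fun V hV => ?_
        rcases hS V hV with rfl | ⟨U, hU, rfl⟩
        · rw [Set.preimage_empty]; exact isOpen_empty
        · have h2 : (some ⁻¹' (insert none (some '' U)) : Set X) = U := by
            ext x; simp
          rw [h2]; exact hU
      · have hnone : (none : Option X) ∈ ⋃₀ S := by
          obtain ⟨v, V, hVS, hvV⟩ := Set.nonempty_iff_ne_empty.mpr h0
          rcases hS V hVS with rfl | ⟨U, hU, rfl⟩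
          · exact absurd hvV (by simp)
          · exact ⟨_, hVS, by simp⟩
        ext (_ | a)
        · simp only [Set.mem_insert_iff, true_or, iff_true]
          exact hnone
        · simp [Set.mem_sUnion]

/-- A `𝐊`-set of a space `X` (relative to a class `K` of spaces): a set whose image
under any continuous map to a `𝐊`-space has the closure of a unique point as closure. -/
def IsKSet (K : (Y : Type u) → TopologicalSpace Y → Prop)
    (X : Type u) [tX : TopologicalSpace X] (A : Set X) : Prop :=
  ∀ (Y : Type u) (tY : TopologicalSpace Y), K Y tY →
    ∀ f : X → Y, @Continuous X Y tX tY f →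
      ∃! y : Y, @closure Y tY (f '' A) = @closure Y tY {y}

/-- `𝐊(X)`: the collection of closed `𝐊`-sets of `X`. -/
def KSets (K : (Y : Type u) → TopologicalSpace Y → Prop)
    (X : Type u) [TopologicalSpace X] : Set (Set X) :=
  {A : Set X | IsClosed A ∧ IsKSet K X A}

/-- The lower Vietoris topology on a family `G` of subsets of `X`, generated by the
sets `◊U = {A ∈ G | A ∩ U ≠ ∅}` for `U` open. -/
def lowerVietoris {X : Type*} [TopologicalSpace X] (G : Set (Set X)) :
    TopologicalSpace ↥G :=
  TopologicalSpace.generateFrom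
    {S : Set ↥G | ∃ U : Set X, IsOpen U ∧ S = {A : ↥G | ((A : Set X) ∩ U).Nonempty}}

/-- A class `K` of spaces is adequate if `P_H(𝐊(X))` is a `𝐊`-space for every T0 space `X`. -/
def Adequate (K : (Y : Type u) → TopologicalSpace Y → Prop) : Prop :=
  ∀ (X : Type u) (tX : TopologicalSpace X), @T0Space X tX →
    K ↥(@KSets K X tX) (@lowerVietoris X tX (@KSets K X tX))

/-- `⟨Z, η⟩` is a `𝐊`-reflection of `X`. -/
def IsKReflection (K : (Y : Type u) → TopologicalSpace Y → Prop)
    (X : Type u) (tX : TopologicalSpace X)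
    (Z : Type u) (tZ : TopologicalSpace Z) (η : X → Z) : Prop :=
  K Z tZ ∧ @Continuous X Z tX tZ η ∧
  ∀ (Y : Type u) (tY : TopologicalSpace Y), K Y tY →
    ∀ f : X → Y, @Continuous X Y tX tY f →
      ∃! g : Z → Y, @Continuous Z Y tZ tY g ∧ g ∘ η = f

/-- The carrier of the Johnstone poset `𝕁 = ℕ × (ℕ ∪ {ω})`. -/
structure Johnstone where
  fst : ℕ
  snd : WithTop ℕ

/-- The Johnstone order: `(j, k) ≤ (m, n)` iff `j = m` and `k ≤ n`, or `n = ω` and `k ≤ m`. -/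
instance : PartialOrder Johnstone where
  le p q := (p.fst = q.fst ∧ p.snd ≤ q.snd) ∨ (q.snd = ⊤ ∧ p.snd ≤ (q.fst : WithTop ℕ))
  le_refl p := Or.inl ⟨rfl, le_rfl⟩
  le_trans p q r hpq hqr := by
    rcases hpq with ⟨h1, h2⟩ | ⟨h1, h2⟩ <;> rcases hqr with ⟨h3, h4⟩ | ⟨h3, h4⟩
    · exact Or.inl ⟨h1.trans h3, h2.trans h4⟩
    · exact Or.inr ⟨h3, h2.trans h4⟩
    · have hr : r.snd = ⊤ := top_le_iff.mp (h1 ▸ h4)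
      exact Or.inr ⟨hr, h3 ▸ h2⟩
    · rw [h1] at h4
      exact absurd h4 (by simp)
  le_antisymm p q hpq hqp := by
    obtain ⟨pf, ps⟩ := p
    obtain ⟨qf, qs⟩ := q
    rcases hpq with ⟨h1, h2⟩ | ⟨h1, h2⟩ <;> rcases hqp with ⟨h3, h4⟩ | ⟨h3, h4⟩
    · dsimp at *
      cases h1
      cases le_antisymm h2 h4
      rfl
    · dsimp at *
      rw [h3] at h2
      rw [top_le_iff.mp h2] at h4
      exact absurd h4 (by simp)
    · dsimp at *
      rw [h1] at h4
      rw [top_le_iff.mp h4] at h2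
      exact absurd h2 (by simp)
    · dsimp at *
      rw [h3] at h2
      exact absurd h2 (by simp)

/-- The class of d-spaces. -/
def dClass : (Y : Type u) → TopologicalSpace Y → Prop := fun Y tY => @DSpace Y tY

/-- The class of well-filtered spaces. -/
def wfClass : (Y : Type u) → TopologicalSpace Y → Prop := fun Y tY => @WellFiltered Y tY

/-- The class of sober spaces. -/
def soberClass : (Y : Type u) → TopologicalSpace Y → Prop := fun Y tY => @Sober Y tY

section ScottTopology

theorem isScott_scottTop (P : Type*) [Preorder P] :
    @Topology.IsScott P univ _ (scottTop P) := by
  have isOpen_scott_iff (U : Set P) :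
      (Topology.scott P univ).IsOpen U ↔ IsUpperSet U ∧ DirSupInacc U := by
    rw [← dirSupInaccOn_univ]
    let _ := Topology.scott P univ
    have : Topology.IsScott P univ := ⟨rfl⟩
    exact Topology.IsScott.isOpen_iff_isUpperSet_and_dirSupInaccOn
  exact @Topology.IsScott.mk _ _ _ (scottTop P)
    (TopologicalSpace.ext (funext fun U => propext (isOpen_scott_iff U).symm))

variable {P : Type*} [TopologicalSpace P]

theorem specLE_iff_le [Preorder P] [Topology.IsScott P univ] {x y : P} : specLE x y ↔ x ≤ y := by
  rw [specLE, Topology.IsScott.closure_singleton, mem_Iic]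

theorem specLUB_iff_isLUB [Preorder P] [Topology.IsScott P univ] {D : Set P} {a : P} :
    specLUB D a ↔ IsLUB D a := by
  simp only [specLUB, specUB, specLE_iff_le]
  rfl

theorem dSpace_of_isDcpo [PartialOrder P] [Topology.IsScott P univ] (hP : IsDcpo P) :
    DSpace P := by
  have specLE_eq_le : (specLE : P → P → Prop) = (· ≤ ·) :=
    funext₂ fun _ _ => propext specLE_iff_le
  simp only [DSpace, ScottOpenSpec, specLE_eq_le, specLUB_iff_isLUB]
  refine ⟨inferInstance, hP, fun U hU => ?_⟩
  obtain ⟨isUpperSet, dirSupInacc⟩ :=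
    (Topology.IsScott.isOpen_iff_isUpperSet_and_dirSupInaccOn (D := univ)).1 hU
  exact ⟨fun _ _ hxy => isUpperSet hxy, fun _ hne hD _ ha => dirSupInacc trivial hne hD ha⟩

end ScottTopology

theorem DSpace.isGenericPoint_closure {Y : Type*} [TopologicalSpace Y] (hY : DSpace Y)
    {D : Set Y} (hne : D.Nonempty) (hD : DirectedOn specLE D) {a : Y} (ha : specLUB D a) :
    IsGenericPoint a (closure D) := by
  have mem_closure : a ∈ closure D := mem_closure_iff.2 fun V hV haV =>
    inter_comm D V ▸ (hY.2.2 V hV).2 D hne hD a ha haV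
  exact (closure_minimal (singleton_subset_iff.2 mem_closure) isClosed_closure).antisymm
    (closure_minimal ha.1 isClosed_closure)

theorem mem_open_iff_of_isGenericPoint_closure_image {X Y : Type*} [TopologicalSpace Y]
    {f : X → Y} {A : Set X} {y : Y} (hy : IsGenericPoint y (closure (f '' A)))
    {V : Set Y} (hV : IsOpen V) : y ∈ V ↔ (A ∩ f ⁻¹' V).Nonempty := by
  rw [hy.mem_open_set_iff hV, closure_inter_open_nonempty_iff hV, image_inter_nonempty_iff]

section KSets

variable {K : (Y : Type u) → TopologicalSpace Y → Prop}
  {X Y : Type u} [TopologicalSpace X] [tY : TopologicalSpace Y]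

theorem IsKSet.exists_isGenericPoint {A : Set X} (hA : IsKSet K X A) (hY : K Y tY)
    {f : X → Y} (hf : Continuous f) : ∃ y, IsGenericPoint y (closure (f '' A)) :=
  (hA Y tY hY f hf).exists.imp fun _ => Eq.symm

theorem isKSet_of_exists_isGenericPoint (hK : ∀ Y tY, K Y tY → @T0Space Y tY) {A : Set X}
    (hA : ∀ (Y : Type u) [tY : TopologicalSpace Y], K Y tY → ∀ f : X → Y, Continuous f →
      ∃ y, IsGenericPoint y (closure (f '' A))) :
    IsKSet K X A := by
  intro Y tY hY f hf
  have := hK Y tY hY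
  obtain ⟨y, hy⟩ := hA Y hY f hf
  exact ⟨y, hy.symm, fun z hz => IsGenericPoint.eq hz.symm hy⟩

theorem isKSet_singleton (hK : ∀ Y tY, K Y tY → @T0Space Y tY) (x : X) : IsKSet K X {x} :=
  isKSet_of_exists_isGenericPoint hK fun Y _ _ f _ =>
    ⟨f x, by rw [image_singleton]; exact isGenericPoint_closure⟩

protected theorem IsKSet.closure {A : Set X} (hA : IsKSet K X A) : IsKSet K X (closure A) := by
  intro Y tY hY f hf
  rw [closure_image_closure hf]
  exact hA Y tY hY f hf

theorem IsKSet.closure_mem_KSets {A : Set X} (hA : IsKSet K X A) : closure A ∈ KSets K X :=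
  ⟨isClosed_closure, hA.closure⟩

theorem isKSet_sUnion_of_directedOn (hK : K ≤ dClass) {𝒜 : Set (Set X)} (hne : 𝒜.Nonempty)
    (hdir : DirectedOn (· ⊆ ·) 𝒜) (h𝒜 : ∀ A ∈ 𝒜, IsKSet K X A) : IsKSet K X (⋃₀ 𝒜) := by
  refine isKSet_of_exists_isGenericPoint (fun Y tY hY => (hK Y tY hY).1) fun Y tY hY f hf => ?_
  have exists_generic : ∀ A ∈ 𝒜, ∃ y, IsGenericPoint y (closure (f '' A)) :=
    fun A hA => (h𝒜 A hA).exists_isGenericPoint hY hf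
  let D : Set Y := {y | ∃ A ∈ 𝒜, IsGenericPoint y (closure (f '' A))}
  have D_nonempty : D.Nonempty :=
    let ⟨A, hA⟩ := hne
    (exists_generic A hA).imp fun _ hy => ⟨A, hA, hy⟩
  have D_directed : DirectedOn specLE D := by
    rintro y ⟨A, hA, hy⟩ z ⟨B, hB, hz⟩
    obtain ⟨C, hC, hAC, hBC⟩ := hdir A hA B hB
    obtain ⟨w, hw⟩ := exists_generic C hC
    exact ⟨w, ⟨C, hC, hw⟩, hw.def.superset (closure_mono (image_mono hAC) hy.mem),
      hw.def.superset (closure_mono (image_mono hBC) hz.mem)⟩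
  have closure_D : closure D = closure (f '' ⋃₀ 𝒜) := by
    refine (closure_minimal ?_ isClosed_closure).antisymm (closure_minimal ?_ isClosed_closure)
    · rintro y ⟨A, hA, hy⟩
      exact closure_mono (image_mono (subset_sUnion_of_mem hA)) hy.mem
    · rintro _ ⟨x, ⟨A, hA, hx⟩, rfl⟩
      obtain ⟨y, hy⟩ := exists_generic A hA
      have y_mem : y ∈ D := ⟨A, hA, hy⟩
      exact closure_mono (singleton_subset_iff.2 y_mem)
        (hy.def.superset (subset_closure (mem_image_of_mem f hx)))
  obtain ⟨a, ha⟩ := (hK Y tY hY).2.1 D D_nonempty D_directed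
  exact ⟨a, closure_D ▸ (hK Y tY hY).isGenericPoint_closure D_nonempty D_directed ha⟩

theorem KSets.isLUB_of_coe_eq_closure_sUnion {D : Set (KSets K X)} {A : KSets K X}
    (hA : (A : Set X) = closure (⋃₀ ((↑) '' D))) : IsLUB D A := by
  refine ⟨fun B hB => ?_, fun B hB => ?_⟩
  · change (B : Set X) ⊆ A
    exact hA ▸ (subset_sUnion_of_mem (mem_image_of_mem _ hB)).trans subset_closure
  · change (A : Set X) ⊆ B
    exact hA ▸ closure_minimal (sUnion_subset (forall_mem_image.2 hB)) B.2.1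

theorem KSets.exists_coe_eq_closure_sUnion (hK : K ≤ dClass) {D : Set (KSets K X)}
    (hne : D.Nonempty) (hD : DirectedOn (· ≤ ·) D) :
    ∃ A : KSets K X, (A : Set X) = closure (⋃₀ ((↑) '' D)) :=
  have isKSet_sUnion : IsKSet K X (⋃₀ ((↑) '' D)) :=
    isKSet_sUnion_of_directedOn hK (hne.image _) (directedOn_image.2 hD)
      (forall_mem_image.2 fun A _ => A.2.2)
  ⟨⟨_, isKSet_sUnion.closure_mem_KSets⟩, rfl⟩

theorem KSets.isDcpo (hK : K ≤ dClass) : IsDcpo (KSets K X) := fun _ hne hD =>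
  (KSets.exists_coe_eq_closure_sUnion hK hne hD).imp fun _ => KSets.isLUB_of_coe_eq_closure_sUnion

theorem KSets.coe_eq_closure_sUnion_of_isLUB (hK : K ≤ dClass) {D : Set (KSets K X)}
    (hne : D.Nonempty) (hD : DirectedOn (· ≤ ·) D) {A : KSets K X} (hA : IsLUB D A) :
    (A : Set X) = closure (⋃₀ ((↑) '' D)) := by
  obtain ⟨B, hB⟩ := KSets.exists_coe_eq_closure_sUnion hK hne hD
  rwa [hA.unique (KSets.isLUB_of_coe_eq_closure_sUnion hB)]

theorem KSets.unit_le_iff_mem {η : X → KSets K X} (hη : ∀ x, (η x : Set X) = closure {x}) {x : X}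
    {A : KSets K X} : η x ≤ A ↔ x ∈ (A : Set X) := by
  rw [← Subtype.coe_le_coe, hη]
  exact A.2.1.closure_subset_iff.trans singleton_subset_iff

variable [tKX : TopologicalSpace (KSets K X)] [Topology.IsScott (KSets K X) univ]

theorem KSets.continuous_of_isGenericPoint_closure_image (hK : K ≤ dClass) {f : X → Y}
    (hf : Continuous f) {g : KSets K X → Y}
    (hg : ∀ A : KSets K X, IsGenericPoint (g A) (closure (f '' A))) : Continuous g := by
  have mem_iff {V : Set Y} (hV : IsOpen V) (A : KSets K X) :
      A ∈ g ⁻¹' V ↔ ((A : Set X) ∩ f ⁻¹' V).Nonempty :=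
    mem_open_iff_of_isGenericPoint_closure_image (hg A) hV
  refine continuous_def.2 fun V hV =>
    (Topology.IsScott.isOpen_iff_isUpperSet_and_dirSupInaccOn (D := univ)).2
      ⟨fun A B hAB hA => ?_, fun D _ hne hD A hlub hA => ?_⟩
  · exact (mem_iff hV B).2 (((mem_iff hV A).1 hA).mono (inter_subset_inter_left _ hAB))
  · rw [mem_iff hV, KSets.coe_eq_closure_sUnion_of_isLUB hK hne hD hlub,
      closure_inter_open_nonempty_iff (hV.preimage hf)] at hA
    obtain ⟨x, ⟨_, ⟨B, hB, rfl⟩, hx⟩, hxV⟩ := hA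
    exact ⟨B, hB, (mem_iff hV B).2 ⟨x, hx, hxV⟩⟩

theorem KSets.isGenericPoint_closure_image_unit {η : X → KSets K X} (hKX : K (KSets K X) tKX)
    (hη : ∀ x, (η x : Set X) = closure {x}) (hηc : Continuous η) (A : KSets K X) :
    IsGenericPoint A (closure (η '' A)) := by
  obtain ⟨B, hB⟩ := A.2.2.exists_isGenericPoint hKX hηc
  have closure_eq_Iic : closure (η '' A) = Iic B :=
    hB.def.symm.trans Topology.IsScott.closure_singleton
  have hAB : A ≤ B := fun x hx => (KSets.unit_le_iff_mem hη).1
    (closure_eq_Iic.subset (subset_closure (mem_image_of_mem η hx)))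
  have image_subset_Iic : η '' A ⊆ Iic A :=
    image_subset_iff.2 fun x hx => (KSets.unit_le_iff_mem hη).2 hx
  have hBA : B ≤ A := closure_minimal image_subset_Iic isClosed_Iic hB.mem
  exact hBA.antisymm hAB ▸ hB

theorem KSets.continuous_and_comp_unit_eq_iff [T0Space Y] {η : X → KSets K X} (hK : K ≤ dClass)
    (hKX : K (KSets K X) tKX) (hη : ∀ x, (η x : Set X) = closure {x})
    (hηc : Continuous η) {f : X → Y} (hf : Continuous f) {g : KSets K X → Y} :
    (Continuous g ∧ g ∘ η = f) ↔
      ∀ A : KSets K X, IsGenericPoint (g A) (closure (f '' A)) := by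
  constructor
  · rintro ⟨hg, rfl⟩ A
    have generic_image := (KSets.isGenericPoint_closure_image_unit hKX hη hηc A).image hg
    rwa [closure_image_closure hg, ← image_comp] at generic_image
  · refine fun hg => ⟨KSets.continuous_of_isGenericPoint_closure_image hK hf hg, funext fun x => ?_⟩
    have generic_unit := hg (η x)
    rw [hη, closure_image_closure hf, image_singleton] at generic_unit
    exact generic_unit.eq isGenericPoint_closure

end KSets

theorem stmt10_general {K : (Y : Type u) → TopologicalSpace Y → Prop} (hK : K ≤ dClass)
    (X : Type u) [tX : TopologicalSpace X] (hKX : K (KSets K X) (scottTop (KSets K X))) :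
    (∀ x : X, closure ({x} : Set X) ∈ KSets K X) ∧
    ∀ η : X → ↥(KSets K X),
      (∀ x : X, (η x : Set X) = closure ({x} : Set X)) →
      @Continuous X ↥(KSets K X) tX (scottTop ↥(KSets K X)) η →
      IsKReflection K X tX ↥(KSets K X) (scottTop ↥(KSets K X)) η := by
  have t0Space_of_mem : ∀ Y tY, K Y tY → @T0Space Y tY := fun Y tY hY => (hK Y tY hY).1
  let _ := scottTop (KSets K X)
  have := isScott_scottTop (KSets K X)
  refine ⟨fun x => (isKSet_singleton t0Space_of_mem x).closure_mem_KSets,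
    fun η hη hηc => ⟨hKX, hηc, fun Y tY hY f hf => ?_⟩⟩
  have := t0Space_of_mem Y tY hY
  have extends_iff {g : KSets K X → Y} :=
    KSets.continuous_and_comp_unit_eq_iff hK hKX hη hηc hf (g := g)
  choose g hg using fun A : KSets K X => A.2.2.exists_isGenericPoint hY hf
  exact ⟨g, extends_iff.2 hg, fun k hk => funext fun A => (extends_iff.1 hk A).eq (hg A)⟩

/-- If `η : X → Σ 𝐝(X)`, `η x = closure {x}`, is continuous, then
`⟨Σ 𝐝(X), η⟩` is a d-reflection of the T0 space `X`. -/
theorem stmt10 (X : Type u) [tX : TopologicalSpace X] [T0Space X] :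
    (∀ x : X, closure ({x} : Set X) ∈ KSets dClass X) ∧
    ∀ η : X → ↥(KSets dClass X),
      (∀ x : X, (η x : Set X) = closure ({x} : Set X)) →
      @Continuous X ↥(KSets dClass X) tX (scottTop ↥(KSets dClass X)) η →
      IsKReflection dClass X tX ↥(KSets dClass X) (scottTop ↥(KSets dClass X)) η :=
  stmt10_general le_rfl X
    (@dSpace_of_isDcpo _ (scottTop _) _ (isScott_scottTop _) (KSets.isDcpo le_rfl))
end

section
/- Let X be a countably infinite set equipped with the cofinite topology (the closed sets are the finite sets and X itself). Then: (a) X is not well-filtered; (b) the sobrification of X is not a Scott space, i.e. there is no poset Q such that P_H(irr_c(X)), the set of irreducible closed subsets of X with the lower Vietoris topology, is homeomorphic to Σ Q. -/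
universe u v

open Set

/-!
Both parts follow from the failure of sobriety: `univ` is irreducible, but it is not the closure of
a point. The other irreducible closed sets are the singletons, so the irreducible closed sets
satisfy the ascending chain condition.

A well-filtered Noetherian space is sober: all its subsets are compact, so well-filteredness
applies to the open sets that meet a given irreducible closed set.

If the irreducible closed sets satisfy the ascending chain condition, then a poset whose Scott
space is the sobrification of `X` satisfies it too, and all its upper sets are Scott open. In
particular, for an irreducible closed `A`, the principal upper set of the corresponding element of
the poset is open, hence of the form `◊U`. All members of `◊U` contain `A`, so any point of `A ∩ U`
is generic in `A`.
-/

section Irreducible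

variable {X : Type*} [TopologicalSpace X] {A : Set X}

theorem irredClosed_iff : IrredClosed A ↔ IsIrreducible A ∧ IsClosed A := by
  rw [IrredClosed, IsIrreducible, isPreirreducible_iff_isClosed_union_isClosed, and_assoc,
    and_comm (a := IsClosed A)]

theorem irredClosed_closure_singleton (x : X) : IrredClosed (closure {x}) :=
  irredClosed_iff.mpr ⟨isIrreducible_singleton.closure, isClosed_closure⟩

theorem IrredClosed.inter_inter_nonempty (hA : IrredClosed A) {U V : Set X} (hU : IsOpen U)
    (hV : IsOpen V) (hAU : (A ∩ U).Nonempty) (hAV : (A ∩ V).Nonempty) :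
    (A ∩ (U ∩ V)).Nonempty :=
  (irredClosed_iff.mp hA).1.isPreirreducible U V hU hV hAU hAV

theorem sober_of_exists_subset_closure [T0Space X]
    (h : ∀ A : Set X, IrredClosed A → ∃ x ∈ A, A ⊆ closure {x}) : Sober X := by
  intro A hA
  obtain ⟨x, hx, hsub⟩ := h A hA
  have hAx : A = closure {x} :=
    hsub.antisymm (closure_minimal (singleton_subset_iff.mpr hx) hA.2.1)
  exact ⟨x, hAx, fun y hAy => (inseparable_iff_closure_eq.mpr (hAy.symm.trans hAx)).eq⟩

theorem not_sober [T1Space X] [IrreducibleSpace X] [Nontrivial X] : ¬ Sober X := by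
  intro hX
  obtain ⟨x, hx, -⟩ :=
    hX univ (irredClosed_iff.mpr ⟨IrreducibleSpace.isIrreducible_univ X, isClosed_univ⟩)
  rw [closure_singleton] at hx
  exact not_subsingleton X (subsingleton_univ_iff.mp (hx ▸ subsingleton_singleton))

theorem WellFiltered.sober [TopologicalSpace.NoetherianSpace X] (hX : WellFiltered X) :
    Sober X := by
  obtain ⟨hT0, hwf⟩ := hX
  refine sober_of_exists_subset_closure fun A hA => ?_
  let 𝒦 : Set (Set X) := {U | IsOpen U ∧ (A ∩ U).Nonempty}
  have hcompact : ∀ U ∈ 𝒦, U.Nonempty ∧ IsCompact U ∧ Saturated U := fun U hU =>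
    ⟨hU.2.mono inter_subset_right, TopologicalSpace.NoetherianSpace.isCompact U, {U},
      by simpa using hU.1, (sInter_singleton U).symm⟩
  have hfiltered : DirectedOn (fun U V => V ⊆ U) 𝒦 := fun U hU V hV =>
    ⟨U ∩ V, ⟨hU.1.inter hV.1, hA.inter_inter_nonempty hU.1 hV.1 hU.2 hV.2⟩,
      inter_subset_left, inter_subset_right⟩
  have hmeet : ¬ ⋂₀ 𝒦 ⊆ Aᶜ := by
    intro h
    obtain ⟨U, hU, hUA⟩ :=
      hwf 𝒦 ⟨univ, isOpen_univ, by simpa using hA.1⟩ hcompact hfiltered Aᶜ hA.2.1.isOpen_compl h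
    obtain ⟨x, hxA, hxU⟩ := hU.2
    exact hUA hxU hxA
  obtain ⟨x, hx𝒦, hxA⟩ := not_subset.mp hmeet
  refine ⟨x, not_notMem.mp hxA, fun y hy => mem_closure_iff.mpr fun U hU hyU => ?_⟩
  exact ⟨x, hx𝒦 U ⟨hU, y, hy, hyU⟩, rfl⟩

end Irreducible

section Scott

variable {P : Type*} [Preorder P]

theorem noetherian_of_wellFoundedGT [WellFoundedGT P] : Noetherian P := by
  intro D hne hdir
  obtain ⟨m, hm⟩ := exists_maximal_of_wellFoundedGT (· ∈ D) hne
  exact ⟨m, hm.prop, hdir.is_top_of_is_max hm.prop fun _ hd hmd => hm.le_of_ge hd hmd⟩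

theorem Noetherian.isScottOpen (hP : Noetherian P) {U : Set P} (hU : IsUpperSet U) :
    IsScottOpen U := by
  refine ⟨hU, fun D hne hdir a ha haU => ?_⟩
  obtain ⟨m, hmD, hm⟩ := hP D hne hdir
  exact ⟨m, hmD, hU (ha.2 hm) haU⟩

end Scott

section LowerVietoris

variable {X : Type*} [TopologicalSpace X]

theorem isOpen_lowerVietoris_setOf_inter_nonempty (G : Set (Set X)) {U : Set X} (hU : IsOpen U) :
    @IsOpen ↥G (lowerVietoris G) {A : ↥G | ((A : Set X) ∩ U).Nonempty} :=
  TopologicalSpace.isOpen_generateFrom_of_mem ⟨U, hU, rfl⟩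

theorem exists_eq_of_isOpen_lowerVietoris_irredClosed {V : Set ↥{A : Set X | IrredClosed A}}
    (hV : @IsOpen _ (lowerVietoris _) V) :
    ∃ U : Set X, IsOpen U ∧
      V = {A : ↥{A : Set X | IrredClosed A} | ((A : Set X) ∩ U).Nonempty} := by
  induction hV with
  | basic _ hV => exact hV
  | univ => exact ⟨univ, isOpen_univ, by ext A; simpa using A.2.1⟩
  | inter V W _ _ ihV ihW =>
    obtain ⟨U₁, hU₁, rfl⟩ := ihV
    obtain ⟨U₂, hU₂, rfl⟩ := ihW
    refine ⟨U₁ ∩ U₂, hU₁.inter hU₂, Subset.antisymm ?_ ?_⟩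
    · exact fun A hA => A.2.inter_inter_nonempty hU₁ hU₂ hA.1 hA.2
    · rintro A ⟨x, hxA, hx₁, hx₂⟩
      exact ⟨⟨x, hxA, hx₁⟩, ⟨x, hxA, hx₂⟩⟩
  | sUnion 𝒱 _ ih =>
    choose! U hU hVU using ih
    refine ⟨⋃ V ∈ 𝒱, U V, isOpen_biUnion hU, ?_⟩
    ext A
    have hmem : ∀ V ∈ 𝒱, A ∈ V ↔ ((A : Set X) ∩ U V).Nonempty := fun V hV =>
      Set.ext_iff.mp (hVU V hV) A
    simp only [inter_iUnion₂, mem_ofPred_eq, nonempty_iUnion, exists_prop]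
    exact exists_congr fun V => and_congr_right (hmem V)

theorem monotone_of_continuous_scottTop {Q : Type*} [Preorder Q] {G : Set (Set X)}
    (hG : ∀ A ∈ G, IsClosed A) {f : Q → ↥G}
    (hf : @Continuous Q ↥G (scottTop Q) (lowerVietoris G) f) : Monotone f := by
  let := scottTop Q
  let := lowerVietoris G
  intro a b hab x hxa
  by_contra hxb
  have hopen : IsScottOpen (f ⁻¹' {A | ((A : Set X) ∩ (f b : Set X)ᶜ).Nonempty}) :=
    hf.isOpen_preimage _
      (isOpen_lowerVietoris_setOf_inter_nonempty G (hG _ (f b).2).isOpen_compl)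
  obtain ⟨y, hy, hyb⟩ := hopen.1 hab ⟨x, hxa, hxb⟩
  exact hyb hy

theorem sober_of_homeomorph_scottTop [T0Space X] [WellFoundedGT ↥{A : Set X | IrredClosed A}]
    {Q : Type*} [Preorder Q]
    (h : @Homeomorph ↥{A : Set X | IrredClosed A} Q (lowerVietoris _) (scottTop Q)) :
    Sober X := by
  let := lowerVietoris {A : Set X | IrredClosed A}
  let := scottTop Q
  refine sober_of_exists_subset_closure fun A hA => ?_
  have hmono : Monotone h.symm :=
    monotone_of_continuous_scottTop (fun _ hB => hB.2.1) h.symm.continuous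
  have : WellFoundedGT Q := (hmono.strictMono_of_injective h.symm.injective).wellFoundedGT
  have hopen : IsOpen (h ⁻¹' Ici (h ⟨A, hA⟩)) :=
    h.continuous.isOpen_preimage _ (noetherian_of_wellFoundedGT.isScottOpen (isUpperSet_Ici _))
  obtain ⟨U, -, hU⟩ := exists_eq_of_isOpen_lowerVietoris_irredClosed hopen
  obtain ⟨x, hxA, hxU⟩ := hU.subset (show ⟨A, hA⟩ ∈ h ⁻¹' Ici (h ⟨A, hA⟩) from le_rfl)
  have hle : h ⟨A, hA⟩ ≤ h ⟨closure {x}, irredClosed_closure_singleton x⟩ :=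
    hU.superset ⟨x, subset_closure rfl, hxU⟩
  exact ⟨x, hxA, by simpa using hmono hle⟩

end LowerVietoris

section Cofinite

variable {X : Type*} [TopologicalSpace X]

theorem wellFoundedGT_irredClosed_of_finite [T1Space X]
    (hfin : ∀ A : Set X, IsClosed A → A = univ ∨ A.Finite) :
    WellFoundedGT ↥{A : Set X | IrredClosed A} := by
  -- In `Prop`, `False < True`; only `univ` can lie strictly above another irreducible closed set.
  have hstrict : StrictMono fun A : ↥{A : Set X | IrredClosed A} => (A : Set X) = univ := by
    intro A B hAB
    have hss : (A : Set X) ⊂ B := hAB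
    have hA : (A : Set X) ≠ univ := (hss.trans_subset (subset_univ _)).ne
    have hB : (B : Set X) = univ := by
      refine (hfin B B.2.2.1).resolve_right fun hB => hss.not_subset fun b hb => ?_
      obtain ⟨a, ha⟩ := A.2.1
      have hsub : (B : Set X).Subsingleton :=
        hB.isDiscrete.subsingleton_of_isPreirreducible (irredClosed_iff.mp B.2).1.isPreirreducible
      exact hsub (hss.subset ha) hb ▸ ha
    exact ⟨fun _ => hB, fun h => hA (h hB)⟩
  exact hstrict.wellFoundedGT

/-- The identity, as a homeomorphism onto Mathlib's type synonym `CofiniteTopology X`, for a space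
whose topology is known to be the cofinite one. -/
def homeomorphCofiniteTopology (ht : ∀ U : Set X, IsOpen U ↔ U = ∅ ∨ Uᶜ.Finite) :
    X ≃ₜ CofiniteTopology X :=
  CofiniteTopology.of.toHomeomorph fun U => by
    rw [ht, CofiniteTopology.isOpen_iff', ← preimage_compl, ← Equiv.image_symm_eq_preimage,
      ← Equiv.image_symm_eq_preimage, image_eq_empty,
      finite_image_iff (Equiv.injective _).injOn]

end Cofinite

theorem stmt14_general (X : Type u) [TopologicalSpace X] [Infinite X]
    (ht : ∀ U : Set X, IsOpen U ↔ U = ∅ ∨ Uᶜ.Finite) :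
    ¬ WellFiltered X ∧
    ¬ ∃ (Q : Type v) (pQ : PartialOrder Q),
        Nonempty (@Homeomorph ↥{A : Set X | IrredClosed A} Q
          (lowerVietoris {A : Set X | IrredClosed A}) (@scottTop Q pQ.toPreorder)) := by
  have e : X ≃ₜ CofiniteTopology X := homeomorphCofiniteTopology ht
  have : T1Space X := e.symm.t1Space
  have : TopologicalSpace.NoetherianSpace X :=
    (TopologicalSpace.noetherianSpace_iff_of_homeomorph e).mpr inferInstance
  have : IrreducibleSpace X := e.irreducibleSpace_iff.mpr inferInstance
  have : WellFoundedGT ↥{A : Set X | IrredClosed A} :=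
    wellFoundedGT_irredClosed_of_finite fun A hA => by
      rwa [← isOpen_compl_iff, ht, compl_compl, compl_empty_iff] at hA
  exact ⟨fun hX => not_sober hX.sober,
    fun ⟨_, _, ⟨h⟩⟩ => not_sober (sober_of_homeomorph_scottTop h)⟩

/-- A countably infinite set with the cofinite topology is not
well-filtered, and its sobrification is not a Scott space. -/
theorem stmt14 (X : Type u) [tX : TopologicalSpace X] [Countable X] [Infinite X]
    (ht : ∀ U : Set X, IsOpen U ↔ U = ∅ ∨ Uᶜ.Finite) :
    ¬ WellFiltered X ∧
    ¬ ∃ (Q : Type v) (pQ : PartialOrder Q),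
        Nonempty (@Homeomorph ↥{A : Set X | IrredClosed A} Q
          (lowerVietoris {A : Set X | IrredClosed A}) (@scottTop Q pQ.toPreorder)) :=
  stmt14_general X ht
end
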